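/- Let n ∈ ℕ and let a₁, …, aₙ be positive real numbers. Suppose that either aᵢ ≥ 1 for all 1 ≤ i ≤ n, or a₁ + ⋯ + aₙ < 1. Then for all real s, t with n + 1 < s < t, the Hausdorff dimension of the set {α ∈ [s, t] : the equation y = a₁x₁ + ⋯ + aₙxₙ has infinitely many non-trivial solutions (y, x₁, …, xₙ) ∈ PS(α)^{n+1}} is at most (n + 1)/s. -/

import Mathlib

open MeasureTheory

/-- The Piatetski–Shapiro set `PS(α) = {⌊n^α⌋ : n ∈ ℕ, n ≥ 1}`. -/
def PS (α : ℝ) : Set ℤ := {m : ℤ | ∃ n : ℕ, 1 ≤ n ∧ m = ⌊(n : ℝ) ^ α⌋}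

/-!
Each pair `(m, k)` of a left-hand base `m` and a tuple `k` of right-hand bases contributes the set
of exponents `α ∈ [s, t]` for which `⌊m ^ α⌋ = ∑ i, a i * ⌊k i ^ α⌋` non-trivially. The set to be
measured is the limit superior of these countably many sets, so by the Hausdorff–Cantelli lemma it
has dimension at most `d` as soon as the `d`-th powers of their diameters are summable.

Dividing by `m ^ α` turns such an equation into `∑ i, a i * (k i / m) ^ α = 1 + O(m ^ (-s))`. Two
solutions `α < β` cannot be far apart because the left-hand side moves at a controlled rate:
* if all `a i ≥ 1`, non-triviality forces `k i < m` and the sum decays at rate `1 - max k / m`, so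
  the diameter is `O(m ^ (1 - s) / (m - max k))`;
* if `∑ i, a i < 1`, the sum is convex in `α` and equals `∑ i, a i` at `α = 0`, so its slope beyond
  a point where it is nearly `1` is bounded below. The diameter is `O(m ^ (-s))`, and `k i = O(m)`.

In both cases summing the `d`-th powers over `k` gives `O(m ^ (n - s * d))`, which is summable in
`m` exactly when `d > (n + 1) / s`.
-/

open Filter
open scoped ENNReal

section HausdorffCantelli

theorem hausdorffMeasure_limsup_cofinite_eq_zero {ι X : Type*} [Countable ι] [EMetricSpace X]
    [MeasurableSpace X] [BorelSpace X] {E : ι → Set X} {d : ℝ} (hd : 0 < d)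
    (hE : ∑' i, Metric.ediam (E i) ^ d ≠ ∞) :
    Measure.hausdorffMeasure d (limsup E cofinite) = 0 := by
  have tail_tendsto := ENNReal.tendsto_tsum_compl_atTop_zero hE
  have tail_rpow_tendsto := tail_tendsto.ennrpow_const d⁻¹
  rw [ENNReal.zero_rpow_of_pos (inv_pos.2 hd)] at tail_rpow_tendsto
  have le_liminf := Measure.hausdorffMeasure_le_liminf_tsum d (limsup E cofinite) _
    tail_rpow_tendsto (fun F (i : {i // i ∉ F}) => E i)
    (Eventually.of_forall fun F i => (ENNReal.le_rpow_inv_iff hd).2 <|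
      ENNReal.le_tsum (f := fun i : {i // i ∉ F} => Metric.ediam (E i) ^ d) i)
    (Eventually.of_forall fun F x hx => by
      rw [cofinite.limsup_set_eq] at hx
      obtain ⟨i, hi, hiF⟩ := Set.Infinite.exists_notMem_finset hx F
      exact Set.mem_iUnion.2 ⟨⟨i, hiF⟩, hi⟩)
  rw [tail_tendsto.liminf_eq] at le_liminf
  exact nonpos_iff_eq_zero.1 le_liminf

theorem dimH_limsup_cofinite_le {ι X : Type*} [Countable ι] [EMetricSpace X] {E : ι → Set X}
    {d : ℝ} (hd : 0 < d) (hE : ∑' i, Metric.ediam (E i) ^ d ≠ ∞) :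
    dimH (limsup E cofinite) ≤ ENNReal.ofReal d := by
  borelize X
  refine dimH_le_of_hausdorffMeasure_ne_top ?_
  rw [Real.coe_toNNReal d hd.le, hausdorffMeasure_limsup_cofinite_eq_zero hd hE]
  exact ENNReal.zero_ne_top

theorem ediam_rpow_le_ofReal {S : Set ℝ} {d V : ℝ} (hd : 0 < d)
    (hS : ∀ x ∈ S, ∀ y ∈ S, x ≤ y → (y - x) ^ d ≤ V) :
    Metric.ediam S ^ d ≤ ENNReal.ofReal V := by
  rw [← ENNReal.le_rpow_inv_iff hd]
  refine Metric.ediam_le fun x hx y hy => ?_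
  wlog hxy : x ≤ y generalizing x y
  · rw [edist_comm]
    exact this y hy x hx (le_of_not_ge hxy)
  rw [ENNReal.le_rpow_inv_iff hd, edist_comm, edist_dist, Real.dist_eq,
    abs_of_nonneg (sub_nonneg.2 hxy), ENNReal.ofReal_rpow_of_nonneg (sub_nonneg.2 hxy) hd.le]
  exact ENNReal.ofReal_le_ofReal (hS x hx y hy hxy)

theorem tsum_ediam_rpow_le_ofReal_sum {κ : Type*} {E : κ → Set ℝ} {F : Finset κ} {V : κ → ℝ}
    {d : ℝ} (hd : 0 < d) (hV : ∀ k ∈ F, 0 ≤ V k) (hEF : ∀ k ∉ F, E k = ∅)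
    (hE : ∀ k, ∀ x ∈ E k, ∀ y ∈ E k, x ≤ y → (y - x) ^ d ≤ V k) :
    ∑' k, Metric.ediam (E k) ^ d ≤ ENNReal.ofReal (∑ k ∈ F, V k) := by
  have zero_of_notMem (k : κ) (hk : k ∉ F) : Metric.ediam (E k) ^ d = 0 := by
    rw [hEF k hk, Metric.ediam_empty, ENNReal.zero_rpow_of_pos hd]
  rw [tsum_eq_sum zero_of_notMem, ENNReal.ofReal_sum_of_nonneg hV]
  exact Finset.sum_le_sum fun k _ => ediam_rpow_le_ofReal hd (hE k)

theorem tsum_prod_ne_top_of_le_mul_rpow {κ : Type*} {f : ℕ → κ → ℝ≥0∞} {C p : ℝ} (hp : p < -1)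
    (hf₀ : ∀ k, f 0 k = 0)
    (hf : ∀ m : ℕ, 0 < m → ∑' k, f m k ≤ ENNReal.ofReal (C * (m : ℝ) ^ p)) :
    ∑' i : ℕ × κ, f i.1 i.2 ≠ ∞ := by
  have summable : Summable fun m : ℕ => C * (m : ℝ) ^ p := (Real.summable_nat_rpow.2 hp).mul_left C
  rw [ENNReal.tsum_prod]
  refine ne_top_of_le_ne_top summable.tsum_ofReal_ne_top (ENNReal.tsum_le_tsum fun m => ?_)
  rcases m.eq_zero_or_pos with rfl | hm
  · simp [hf₀]
  · exact hf m hm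

end HausdorffCantelli

section PowerSums

theorem mul_rpow_sub_one_le_rpow_sub_rpow {p x : ℝ} (hp₀ : 0 ≤ p) (hp₁ : p ≤ 1) (hx : 1 ≤ x) :
    p * x ^ (p - 1) ≤ x ^ p - (x - 1) ^ p := by
  have hx₀ : 0 < x := by linarith
  have hinv : x⁻¹ ≤ 1 := inv_le_one_of_one_le₀ hx
  have bernoulli : (1 + -x⁻¹) ^ p ≤ 1 + p * -x⁻¹ :=
    rpow_one_add_le_one_add_mul_self (by linarith) hp₀ hp₁
  have factor : (x - 1) ^ p = x ^ p * (1 + -x⁻¹) ^ p := by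
    rw [← Real.mul_rpow hx₀.le (by linarith)]
    congr 1
    field_simp
    ring
  have := mul_le_mul_of_nonneg_left bernoulli (Real.rpow_nonneg hx₀.le p)
  rw [factor, Real.rpow_sub_one hx₀.ne', div_eq_mul_inv]
  linarith

theorem mul_sum_range_succ_rpow_sub_one_le {p : ℝ} (hp₀ : 0 ≤ p) (hp₁ : p ≤ 1) (m : ℕ) :
    p * ∑ j ∈ Finset.range m, ((j : ℝ) + 1) ^ (p - 1) ≤ (m : ℝ) ^ p := by
  calc p * ∑ j ∈ Finset.range m, ((j : ℝ) + 1) ^ (p - 1)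
      ≤ ∑ j ∈ Finset.range m, (((j + 1 : ℕ) : ℝ) ^ p - (j : ℝ) ^ p) := by
        rw [Finset.mul_sum]
        refine Finset.sum_le_sum fun j _ => ?_
        simpa using mul_rpow_sub_one_le_rpow_sub_rpow hp₀ hp₁
          (le_add_of_nonneg_left (Nat.cast_nonneg (α := ℝ) j))
    _ = (m : ℝ) ^ p - ((0 : ℕ) : ℝ) ^ p := Finset.sum_range_sub (fun j : ℕ => (j : ℝ) ^ p) m
    _ ≤ (m : ℝ) ^ p := sub_le_self _ (by positivity)

theorem sum_range_sub_rpow_neg_le {d : ℝ} (hd₀ : 0 ≤ d) (hd₁ : d < 1) (m : ℕ) :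
    ∑ j ∈ Finset.range m, ((m : ℝ) - j) ^ (-d) ≤ (m : ℝ) ^ (1 - d) / (1 - d) := by
  have reflect : ∑ j ∈ Finset.range m, ((m : ℝ) - j) ^ (-d) =
      ∑ j ∈ Finset.range m, ((j : ℝ) + 1) ^ ((1 - d) - 1) := by
    rw [← Finset.sum_range_reflect]
    refine Finset.sum_congr rfl fun j hj => ?_
    have hjm : j + 1 ≤ m := Finset.mem_range.1 hj
    rw [Nat.sub_sub, add_comm 1 j, Nat.cast_sub hjm]
    push_cast
    congr 1 <;> ring
  rw [reflect, le_div_iff₀' (by linarith)]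
  exact mul_sum_range_succ_rpow_sub_one_le (by linarith) (by linarith) m

theorem sum_piFinset_range_sub_rpow_neg_le {ι : Type*} [Fintype ι] [DecidableEq ι] {d : ℝ}
    (hd₀ : 0 ≤ d) (hd₁ : d < 1) {m : ℕ} (hm : 0 < m) :
    ∑ k ∈ Fintype.piFinset fun _ : ι => Finset.range m, ∑ i, ((m : ℝ) - k i) ^ (-d) ≤
      Fintype.card ι / (1 - d) * (m : ℝ) ^ (Fintype.card ι - d) := by
  have hm₀ : (0 : ℝ) < m := by exact_mod_cast hm
  have coordinate_le (i : ι) :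
      ∑ k ∈ Fintype.piFinset fun _ : ι => Finset.range m, ((m : ℝ) - k i) ^ (-d) ≤
        (m : ℝ) ^ (Fintype.card ι - d) / (1 - d) := by
    have card_pos : 1 ≤ Fintype.card ι := Fintype.card_pos_iff.2 ⟨i⟩
    calc ∑ k ∈ Fintype.piFinset fun _ : ι => Finset.range m, ((m : ℝ) - k i) ^ (-d)
        = (m : ℝ) ^ (Fintype.card ι - 1) * ∑ j ∈ Finset.range m, ((m : ℝ) - j) ^ (-d) := by
          rw [Fintype.sum_piFinset_apply (fun j : ℕ => ((m : ℝ) - j) ^ (-d))]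
          simp
      _ ≤ (m : ℝ) ^ (Fintype.card ι - 1) * ((m : ℝ) ^ (1 - d) / (1 - d)) := by
          gcongr
          exact sum_range_sub_rpow_neg_le hd₀ hd₁ m
      _ = (m : ℝ) ^ (Fintype.card ι - d) / (1 - d) := by
          rw [← mul_div_assoc, ← Real.rpow_natCast, ← Real.rpow_add hm₀, Nat.cast_sub card_pos]
          congr 2
          push_cast
          ring
  calc ∑ k ∈ Fintype.piFinset fun _ : ι => Finset.range m, ∑ i, ((m : ℝ) - k i) ^ (-d)
      = ∑ i, ∑ k ∈ Fintype.piFinset fun _ : ι => Finset.range m, ((m : ℝ) - k i) ^ (-d) :=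
        Finset.sum_comm
    _ ≤ ∑ _i : ι, (m : ℝ) ^ (Fintype.card ι - d) / (1 - d) :=
        Finset.sum_le_sum fun i _ => coordinate_le i
    _ = Fintype.card ι / (1 - d) * (m : ℝ) ^ (Fintype.card ι - d) := by
        rw [Finset.sum_const, Finset.card_univ, nsmul_eq_mul]
        ring

end PowerSums

theorem one_add_mul_one_sub_le_rpow_neg {x c : ℝ} (hx : 0 < x) (hc : 0 ≤ c) :
    1 + c * (1 - x) ≤ x ^ (-c) := by
  have log_le : c * Real.log x ≤ c * (x - 1) :=
    mul_le_mul_of_nonneg_left (Real.log_le_sub_one_of_pos hx) hc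
  rw [Real.rpow_def_of_pos hx]
  linarith [Real.add_one_le_exp (Real.log x * -c)]

theorem sub_mul_rpow_sub_one_le {r α β : ℝ} (hr : 0 < r) (hα : 0 < α) (hαβ : α ≤ β) :
    (β - α) * (r ^ α - 1) ≤ α * (r ^ β - r ^ α) := by
  rcases hαβ.eq_or_lt with rfl | hlt
  · simp
  have slope_le := (convexOn_rpow_left hr).slope_mono_adjacent (Set.mem_univ 0)
    (Set.mem_univ β) hα hlt
  rw [Real.rpow_zero, sub_zero, div_le_div_iff₀ hα (sub_pos.2 hlt)] at slope_le
  linarith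

section WeightedPowerSum

variable {ι : Type*} [Fintype ι] {a r : ι → ℝ}

/-- The function `α ↦ ∑ i, a i * r i ^ α`. With `r i` the ratio of the `i`-th base to that of the
left-hand side, it is close to `1` at every exponent `α` solving the equation. -/
noncomputable def weightedPowerSum (a r : ι → ℝ) (α : ℝ) : ℝ := ∑ i, a i * r i ^ α

variable {R α β t ε : ℝ}

theorem weightedPowerSum_le_rpow_mul (ha : ∀ i, 0 ≤ a i) (hr : ∀ i, 0 < r i)
    (hrR : ∀ i, r i ≤ R) (hαβ : α ≤ β) :
    weightedPowerSum a r β ≤ R ^ (β - α) * weightedPowerSum a r α := by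
  rw [weightedPowerSum, weightedPowerSum, Finset.mul_sum]
  refine Finset.sum_le_sum fun i _ => ?_
  calc a i * r i ^ β = r i ^ (β - α) * (a i * r i ^ α) := by
        rw [mul_left_comm, ← Real.rpow_add (hr i), sub_add_cancel]
    _ ≤ R ^ (β - α) * (a i * r i ^ α) :=
        mul_le_mul_of_nonneg_right
          (Real.rpow_le_rpow (hr i).le (hrR i) (sub_nonneg.2 hαβ))
          (mul_nonneg (ha i) (Real.rpow_nonneg (hr i).le α))

theorem mul_weightedPowerSum_le_sub (ha : ∀ i, 0 ≤ a i) (hr : ∀ i, 0 < r i) (hR : 0 < R)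
    (hrR : ∀ i, r i ≤ R) (hαβ : α ≤ β) :
    (β - α) * (1 - R) * weightedPowerSum a r β ≤
      weightedPowerSum a r α - weightedPowerSum a r β := by
  have nonneg : 0 ≤ weightedPowerSum a r β :=
    Finset.sum_nonneg fun i _ => mul_nonneg (ha i) (Real.rpow_nonneg (hr i).le β)
  have growth : (1 + (β - α) * (1 - R)) * weightedPowerSum a r β ≤ weightedPowerSum a r α := by
    calc (1 + (β - α) * (1 - R)) * weightedPowerSum a r β
        ≤ R ^ (-(β - α)) * weightedPowerSum a r β :=
          mul_le_mul_of_nonneg_right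
            (one_add_mul_one_sub_le_rpow_neg hR (sub_nonneg.2 hαβ)) nonneg
      _ ≤ R ^ (-(β - α)) * (R ^ (β - α) * weightedPowerSum a r α) :=
          mul_le_mul_of_nonneg_left (weightedPowerSum_le_rpow_mul ha hr hrR hαβ)
            (Real.rpow_nonneg hR.le _)
      _ = weightedPowerSum a r α := by
          rw [← mul_assoc, ← Real.rpow_add hR, neg_add_cancel, Real.rpow_zero, one_mul]
  linarith

theorem sub_mul_weightedPowerSum_sub_sum_le (ha : ∀ i, 0 ≤ a i) (hr : ∀ i, 0 < r i)
    (hα : 0 < α) (hαβ : α ≤ β) :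
    (β - α) * (weightedPowerSum a r α - ∑ i, a i) ≤
      α * (weightedPowerSum a r β - weightedPowerSum a r α) := by
  simp only [weightedPowerSum, ← Finset.sum_sub_distrib, Finset.mul_sum]
  refine Finset.sum_le_sum fun i _ => ?_
  linarith [mul_le_mul_of_nonneg_left (sub_mul_rpow_sub_one_le (hr i) hα hαβ) (ha i)]

theorem sub_mul_one_sub_le_of_abs_le (ha : ∀ i, 0 ≤ a i) (hr : ∀ i, 0 < r i) (hR : 0 < R)
    (hR₁ : R ≤ 1) (hrR : ∀ i, r i ≤ R) (hα : 0 ≤ α) (hαβ : α ≤ β) (hβt : β ≤ t)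
    (hεα : |1 - weightedPowerSum a r α| ≤ ε) (hεβ : |1 - weightedPowerSum a r β| ≤ ε) :
    (β - α) * (1 - R) ≤ (2 + t) * ε := by
  rw [abs_le] at hεα hεβ
  have drop := mul_weightedPowerSum_le_sub ha hr hR hrR hαβ
  have gap_nonneg : 0 ≤ (β - α) * (1 - R) := mul_nonneg (by linarith) (by linarith)
  have gap_le : (β - α) * (1 - R) ≤ t :=
    (mul_le_of_le_one_right (by linarith) (by linarith)).trans (by linarith)
  have main : (β - α) * (1 - R) * (1 - ε) ≤ 2 * ε :=
    calc (β - α) * (1 - R) * (1 - ε) ≤ (β - α) * (1 - R) * weightedPowerSum a r β :=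
          mul_le_mul_of_nonneg_left (by linarith) gap_nonneg
      _ ≤ 2 * ε := by linarith
  linarith [mul_le_mul_of_nonneg_right gap_le (by linarith : 0 ≤ ε)]

theorem sub_le_of_abs_le (ha : ∀ i, 0 ≤ a i) (hsum : ∑ i, a i < 1) (hr : ∀ i, 0 < r i)
    (hα : 0 < α) (hαβ : α ≤ β) (hβt : β ≤ t)
    (hεα : |1 - weightedPowerSum a r α| ≤ ε) (hεβ : |1 - weightedPowerSum a r β| ≤ ε) :
    β - α ≤ 2 * t / (1 - ∑ i, a i) * ε := by
  rw [abs_le] at hεα hεβ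
  have rise := sub_mul_weightedPowerSum_sub_sum_le ha hr hα hαβ
  have lower : (β - α) * (1 - ε - ∑ i, a i) ≤ (β - α) * (weightedPowerSum a r α - ∑ i, a i) :=
    mul_le_mul_of_nonneg_left (by linarith) (by linarith)
  have upper : α * (weightedPowerSum a r β - weightedPowerSum a r α) ≤ α * (2 * ε) :=
    mul_le_mul_of_nonneg_left (by linarith) hα.le
  have main : (β - α) * (1 - ∑ i, a i) ≤ (α + β) * ε := by linarith
  rw [div_mul_eq_mul_div, le_div_iff₀ (sub_pos.2 hsum)]
  exact main.trans (mul_le_mul_of_nonneg_right (by linarith) (by linarith))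

end WeightedPowerSum

section Solutions

variable {ι : Type*} [Fintype ι] {a : ι → ℝ}

/-- `(y, x)` is a solution of `y = ∑ i, a i * x i`, excluding the constant solutions that exist
when the coefficients sum to `1`. -/
def IsNontrivialSolution (a : ι → ℝ) (y : ℤ) (x : ι → ℤ) : Prop :=
  (y : ℝ) = ∑ i, a i * (x i : ℝ) ∧ ¬(∑ i, a i = 1 ∧ ∀ i, x i = y)

theorem IsNontrivialSolution.lt {y : ℤ} {x : ι → ℤ} (h : IsNontrivialSolution a y x)
    (ha : ∀ i, 1 ≤ a i) (hx : ∀ i, 0 < x i) (i : ι) : x i < y := by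
  obtain ⟨hy, hnontrivial⟩ := h
  have hx' (j : ι) : (0 : ℝ) < x j := by exact_mod_cast hx j
  have term_pos (j : ι) : 0 < a j * x j := mul_pos (by linarith [ha j]) (hx' j)
  have le_term : (x i : ℝ) ≤ a i * x i := le_mul_of_one_le_left (hx' i).le (ha i)
  by_cases hother : ∃ j, j ≠ i
  · obtain ⟨j, hj⟩ := hother
    have two_terms := Finset.add_le_sum (fun l _ => (term_pos l).le) (Finset.mem_univ i)
      (Finset.mem_univ j) hj.symm
    have : (x i : ℝ) < y := by linarith [term_pos j]
    exact_mod_cast this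
  · push Not at hother
    have sum_unique (f : ι → ℝ) : ∑ j, f j = f i := Fintype.sum_eq_single i fun j hj =>
      absurd (hother j) hj
    rw [sum_unique] at hy hnontrivial
    have le : x i ≤ y := by exact_mod_cast le_term.trans_eq hy.symm
    refine le.lt_of_ne fun heq => hnontrivial ⟨?_, fun j => by rw [hother j, heq]⟩
    rw [← heq] at hy
    exact mul_right_cancel₀ (hx' i).ne' (by rw [← hy, one_mul])

theorem abs_sub_sum_mul_le_of_floor_eq {x : ℝ} {u : ι → ℝ} (ha : ∀ i, 0 ≤ a i)
    (h : (⌊x⌋ : ℝ) = ∑ i, a i * (⌊u i⌋ : ℝ)) :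
    |x - ∑ i, a i * u i| ≤ 1 + ∑ i, a i := by
  have fract_sum_nonneg : 0 ≤ ∑ i, a i * Int.fract (u i) :=
    Finset.sum_nonneg fun i _ => mul_nonneg (ha i) (Int.fract_nonneg _)
  have fract_sum_le : ∑ i, a i * Int.fract (u i) ≤ ∑ i, a i :=
    Finset.sum_le_sum fun i _ => mul_le_of_le_one_right (ha i) (Int.fract_lt_one _).le
  have error : x - ∑ i, a i * u i = Int.fract x - ∑ i, a i * Int.fract (u i) := by
    simp only [Int.fract, mul_sub, Finset.sum_sub_distrib, h]
    ring
  rw [error, abs_le]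
  constructor <;> linarith [Int.fract_nonneg x, Int.fract_lt_one x]

/-- The exponents `α ∈ [s, t]` for which the bases `m` and `k i`, all positive, produce a
non-trivial solution `(⌊m ^ α⌋, fun i ↦ ⌊k i ^ α⌋)`. -/
def solutionExponents (a : ι → ℝ) (s t : ℝ) (m : ℕ) (k : ι → ℕ) : Set ℝ :=
  {α ∈ Set.Icc s t | 0 < m ∧ (∀ i, 0 < k i) ∧
    IsNontrivialSolution a ⌊(m : ℝ) ^ α⌋ fun i => ⌊(k i : ℝ) ^ α⌋}

theorem setOf_infinite_solutions_subset_limsup (a : ι → ℝ) (s t : ℝ) :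
    {α ∈ Set.Icc s t | {sol : ℤ × (ι → ℤ) | sol.1 ∈ PS α ∧ (∀ i, sol.2 i ∈ PS α) ∧
      IsNontrivialSolution a sol.1 sol.2}.Infinite} ⊆
    limsup (fun i : ℕ × (ι → ℕ) => solutionExponents a s t i.1 i.2) cofinite := by
  rintro α ⟨hα, hinf⟩
  rw [cofinite.limsup_set_eq]
  refine Set.Infinite.of_image
    (fun i : ℕ × (ι → ℕ) => (⌊(i.1 : ℝ) ^ α⌋, fun j => ⌊(i.2 j : ℝ) ^ α⌋)) (hinf.mono ?_)
  rintro ⟨y, x⟩ ⟨⟨m, hm, rfl⟩, hx, hsol⟩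
  choose k hk hxk using hx
  obtain rfl : x = fun j => ⌊(k j : ℝ) ^ α⌋ := funext hxk
  exact ⟨(m, k), ⟨hα, hm, hk, hsol⟩, rfl⟩

variable {s t α β : ℝ} {m : ℕ} {k : ι → ℕ}

theorem lt_of_mem_solutionExponents (ha : ∀ i, 1 ≤ a i) (hs : 0 ≤ s)
    (h : α ∈ solutionExponents a s t m k) (i : ι) : k i < m := by
  obtain ⟨hα, -, hk, hsol⟩ := h
  have hα₀ : 0 ≤ α := hs.trans hα.1
  have floor_pos (j : ι) : 0 < ⌊(k j : ℝ) ^ α⌋ :=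
    Int.floor_pos.2 (Real.one_le_rpow (by exact_mod_cast hk j) hα₀)
  refine lt_of_not_ge fun hmk => (hsol.lt ha floor_pos i).not_ge ?_
  exact Int.floor_le_floor (Real.rpow_le_rpow m.cast_nonneg (by exact_mod_cast hmk) hα₀)

theorem abs_one_sub_weightedPowerSum_le (ha : ∀ i, 0 ≤ a i)
    (h : α ∈ solutionExponents a s t m k) :
    |1 - weightedPowerSum a (fun i => (k i : ℝ) / m) α| ≤ (1 + ∑ i, a i) * (m : ℝ) ^ (-s) := by
  obtain ⟨hα, hm, -, hfloor, -⟩ := h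
  have hm₀ : (0 : ℝ) < m := by exact_mod_cast hm
  have normalize : 1 - weightedPowerSum a (fun i => (k i : ℝ) / m) α =
      ((m : ℝ) ^ α - ∑ i, a i * (k i : ℝ) ^ α) * (m : ℝ) ^ (-α) := by
    simp only [weightedPowerSum, Real.div_rpow (Nat.cast_nonneg _) hm₀.le, ← mul_div_assoc,
      ← Finset.sum_div]
    rw [Real.rpow_neg hm₀.le]
    field_simp
  rw [normalize, abs_mul, abs_of_pos (Real.rpow_pos_of_pos hm₀ (-α))]
  exact mul_le_mul (abs_sub_sum_mul_le_of_floor_eq ha hfloor)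
    (Real.rpow_le_rpow_of_exponent_le (by exact_mod_cast hm) (neg_le_neg hα.1))
    (Real.rpow_nonneg hm₀.le _) (add_nonneg zero_le_one (Finset.sum_nonneg fun i _ => ha i))

theorem le_mul_of_mem_solutionExponents (ha : ∀ i, 0 < a i) (hs : 1 ≤ s) {B : ℝ} (hB : 1 ≤ B)
    {i : ι} (hBi : (2 + ∑ j, a j) / a i ≤ B) (h : α ∈ solutionExponents a s t m k) :
    (k i : ℝ) ≤ B * m := by
  have close := abs_one_sub_weightedPowerSum_le (fun j => (ha j).le) h
  obtain ⟨hα, hm, -, -⟩ := h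
  have hm₀ : (0 : ℝ) < m := by exact_mod_cast hm
  have hα₁ : 1 ≤ α := hs.trans hα.1
  have error_le : (1 + ∑ j, a j) * (m : ℝ) ^ (-s) ≤ 1 + ∑ j, a j :=
    mul_le_of_le_one_right (add_nonneg zero_le_one (Finset.sum_nonneg fun j _ => (ha j).le))
      (Real.rpow_le_one_of_one_le_of_nonpos (by exact_mod_cast hm) (by linarith))
  have term_le : a i * ((k i : ℝ) / m) ^ α ≤ weightedPowerSum a (fun j => (k j : ℝ) / m) α :=
    Finset.single_le_sum (f := fun j => a j * ((k j : ℝ) / m) ^ α)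
      (fun j _ => mul_nonneg (ha j).le (by positivity)) (Finset.mem_univ i)
  have rpow_le : ((k i : ℝ) / m) ^ α ≤ B ^ α :=
    calc ((k i : ℝ) / m) ^ α ≤ (2 + ∑ j, a j) / a i := by
          rw [le_div_iff₀' (ha i)]
          linarith [(abs_le.1 close).1]
      _ ≤ B := hBi
      _ ≤ B ^ α := Real.self_le_rpow_of_one_le hB hα₁
  rw [← div_le_iff₀ hm₀]
  exact (Real.rpow_le_rpow_iff (by positivity) (by positivity) (by linarith)).1 rpow_le

theorem exists_sub_le_of_mem_solutionExponents [Nonempty ι] (ha : ∀ i, 1 ≤ a i) (hs : 0 ≤ s)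
    (hα : α ∈ solutionExponents a s t m k) (hβ : β ∈ solutionExponents a s t m k)
    (hαβ : α ≤ β) :
    ∃ i, β - α ≤ (2 + t) * (1 + ∑ j, a j) * (m : ℝ) ^ (1 - s) * ((m : ℝ) - k i)⁻¹ := by
  have ha₀ (i : ι) : 0 ≤ a i := zero_le_one.trans (ha i)
  have close_α := abs_one_sub_weightedPowerSum_le ha₀ hα
  have close_β := abs_one_sub_weightedPowerSum_le ha₀ hβ
  have hlt := lt_of_mem_solutionExponents ha hs hα
  have hm₀ : (0 : ℝ) < m := by exact_mod_cast hα.2.1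
  have ratio_pos (i : ι) : 0 < (k i : ℝ) / m := div_pos (by exact_mod_cast hα.2.2.1 i) hm₀
  obtain ⟨i, hi⟩ := Finite.exists_max k
  have hki : (k i : ℝ) < m := by exact_mod_cast hlt i
  have separation := sub_mul_one_sub_le_of_abs_le ha₀ ratio_pos (ratio_pos i)
    ((div_le_one hm₀).2 hki.le) (fun j => by gcongr; exact hi j) (hs.trans hα.1.1) hαβ hβ.1.2
    close_α close_β
  refine ⟨i, ?_⟩
  rw [one_sub_div hm₀.ne', mul_div_assoc', div_le_iff₀ hm₀] at separation
  rw [← div_eq_mul_inv, le_div_iff₀ (sub_pos.2 hki), sub_eq_neg_add 1 s, Real.rpow_add_one hm₀.ne']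
  linarith

theorem sub_rpow_le_of_mem_solutionExponents [Nonempty ι] (ha : ∀ i, 1 ≤ a i) (hs : 0 ≤ s)
    {d : ℝ} (hd : 0 < d) (hα : α ∈ solutionExponents a s t m k)
    (hβ : β ∈ solutionExponents a s t m k) (hαβ : α ≤ β) :
    (β - α) ^ d ≤ ((2 + t) * (1 + ∑ j, a j)) ^ d * (m : ℝ) ^ ((1 - s) * d) *
      ∑ i, ((m : ℝ) - k i) ^ (-d) := by
  have gap_pos (i : ι) : 0 < (m : ℝ) - k i :=
    sub_pos.2 (by exact_mod_cast lt_of_mem_solutionExponents ha hs hα i)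
  have ht : 0 ≤ t := hs.trans (hα.1.1.trans hα.1.2)
  have hC : 0 ≤ (2 + t) * (1 + ∑ j, a j) :=
    mul_nonneg (by linarith)
      (add_nonneg zero_le_one (Finset.sum_nonneg fun j _ => zero_le_one.trans (ha j)))
  obtain ⟨i, hi⟩ := exists_sub_le_of_mem_solutionExponents ha hs hα hβ hαβ
  calc (β - α) ^ d
      ≤ ((2 + t) * (1 + ∑ j, a j) * (m : ℝ) ^ (1 - s) * ((m : ℝ) - k i)⁻¹) ^ d :=
        Real.rpow_le_rpow (sub_nonneg.2 hαβ) hi hd.le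
    _ = ((2 + t) * (1 + ∑ j, a j)) ^ d * (m : ℝ) ^ ((1 - s) * d) * ((m : ℝ) - k i) ^ (-d) := by
        rw [Real.mul_rpow (by positivity) (inv_nonneg.2 (gap_pos i).le),
          Real.mul_rpow hC (by positivity), ← Real.rpow_mul m.cast_nonneg,
          Real.inv_rpow (gap_pos i).le, ← Real.rpow_neg (gap_pos i).le]
    _ ≤ _ := by
        gcongr
        exact Finset.single_le_sum (f := fun j => ((m : ℝ) - k j) ^ (-d))
          (fun j _ => Real.rpow_nonneg (gap_pos j).le _) (Finset.mem_univ i)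

theorem tsum_ediam_rpow_solutionExponents_le_of_one_le [Nonempty ι] (ha : ∀ i, 1 ≤ a i)
    (hs : 0 ≤ s) (ht : 0 ≤ t) {d : ℝ} (hd₀ : 0 < d) (hd₁ : d < 1) (hm : 0 < m) :
    ∑' k, Metric.ediam (solutionExponents a s t m k) ^ d ≤
      ENNReal.ofReal (((2 + t) * (1 + ∑ j, a j)) ^ d * (Fintype.card ι / (1 - d)) *
        (m : ℝ) ^ (Fintype.card ι - s * d)) := by
  classical
  have hm₀ : (0 : ℝ) < m := by exact_mod_cast hm
  have hC : 0 ≤ (2 + t) * (1 + ∑ j, a j) :=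
    mul_nonneg (by linarith)
      (add_nonneg zero_le_one (Finset.sum_nonneg fun j _ => zero_le_one.trans (ha j)))
  set C := (2 + t) * (1 + ∑ j, a j)
  refine (tsum_ediam_rpow_le_ofReal_sum (F := Fintype.piFinset fun _ => Finset.range m)
    (V := fun k => C ^ d * (m : ℝ) ^ ((1 - s) * d) * ∑ i, ((m : ℝ) - k i) ^ (-d)) hd₀
    (fun k hk => ?_) (fun k hk => ?_) fun k α hα β hβ =>
      sub_rpow_le_of_mem_solutionExponents ha hs hd₀ hα hβ).trans (ENNReal.ofReal_le_ofReal ?_)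
  · have gap_nonneg (i : ι) : 0 ≤ (m : ℝ) - k i := by
      simpa using (Finset.mem_range.1 (Fintype.mem_piFinset.1 hk i)).le
    exact mul_nonneg (by positivity)
      (Finset.sum_nonneg fun i _ => Real.rpow_nonneg (gap_nonneg i) _)
  · refine Set.eq_empty_of_forall_notMem fun α hα => hk (Fintype.mem_piFinset.2 fun i => ?_)
    exact Finset.mem_range.2 (lt_of_mem_solutionExponents ha hs hα i)
  · rw [← Finset.mul_sum]
    calc C ^ d * (m : ℝ) ^ ((1 - s) * d) *
          ∑ k ∈ Fintype.piFinset fun _ : ι => Finset.range m, ∑ i, ((m : ℝ) - k i) ^ (-d)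
        ≤ C ^ d * (m : ℝ) ^ ((1 - s) * d) *
          (Fintype.card ι / (1 - d) * (m : ℝ) ^ (Fintype.card ι - d)) := by
          gcongr
          exact sum_piFinset_range_sub_rpow_neg_le hd₀.le hd₁ hm
      _ = C ^ d * (Fintype.card ι / (1 - d)) *
          ((m : ℝ) ^ ((1 - s) * d) * (m : ℝ) ^ (Fintype.card ι - d)) := by ring
      _ = C ^ d * (Fintype.card ι / (1 - d)) * (m : ℝ) ^ (Fintype.card ι - s * d) := by
          rw [← Real.rpow_add hm₀]
          congr 2
          ring

theorem sub_le_of_mem_solutionExponents (ha : ∀ i, 0 < a i) (hsum : ∑ i, a i < 1) (hs : 0 < s)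
    (hα : α ∈ solutionExponents a s t m k) (hβ : β ∈ solutionExponents a s t m k)
    (hαβ : α ≤ β) :
    β - α ≤ 2 * t / (1 - ∑ i, a i) * (1 + ∑ i, a i) * (m : ℝ) ^ (-s) := by
  have ha₀ (i : ι) : 0 ≤ a i := (ha i).le
  have hm₀ : (0 : ℝ) < m := by exact_mod_cast hα.2.1
  rw [mul_assoc]
  exact sub_le_of_abs_le ha₀ hsum (fun i => div_pos (by exact_mod_cast hα.2.2.1 i) hm₀)
    (hs.trans_le hα.1.1) hαβ hβ.1.2 (abs_one_sub_weightedPowerSum_le ha₀ hα)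
    (abs_one_sub_weightedPowerSum_le ha₀ hβ)

theorem tsum_ediam_rpow_solutionExponents_le_of_sum_lt_one (ha : ∀ i, 0 < a i)
    (hsum : ∑ i, a i < 1) (hs : 1 ≤ s) (ht : 0 ≤ t) {d : ℝ} (hd : 0 < d) {B : ℕ} (hB : 1 ≤ B)
    (haB : ∀ i, (2 + ∑ j, a j) / a i ≤ B) (hm : 0 < m) :
    ∑' k, Metric.ediam (solutionExponents a s t m k) ^ d ≤
      ENNReal.ofReal ((2 * t / (1 - ∑ i, a i) * (1 + ∑ i, a i)) ^ d *
        ((B : ℝ) + 1) ^ Fintype.card ι * (m : ℝ) ^ (Fintype.card ι - s * d)) := by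
  classical
  have hm₀ : (0 : ℝ) < m := by exact_mod_cast hm
  have hC : 0 ≤ 2 * t / (1 - ∑ i, a i) * (1 + ∑ i, a i) :=
    mul_nonneg (div_nonneg (by linarith) (by linarith))
      (add_nonneg zero_le_one (Finset.sum_nonneg fun i _ => (ha i).le))
  set C := 2 * t / (1 - ∑ i, a i) * (1 + ∑ i, a i)
  refine (tsum_ediam_rpow_le_ofReal_sum
    (F := Fintype.piFinset fun _ => Finset.range (B * m + 1))
    (V := fun _ => (C * (m : ℝ) ^ (-s)) ^ d) hd (fun k _ => by positivity) (fun k hk => ?_)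
    fun k α hα β hβ hαβ => Real.rpow_le_rpow (sub_nonneg.2 hαβ)
      (sub_le_of_mem_solutionExponents ha hsum (by linarith) hα hβ hαβ) hd.le).trans
    (ENNReal.ofReal_le_ofReal ?_)
  · refine Set.eq_empty_of_forall_notMem fun α hα => hk (Fintype.mem_piFinset.2 fun i => ?_)
    have := le_mul_of_mem_solutionExponents ha hs (by exact_mod_cast hB) (haB i) hα
    exact Finset.mem_range_succ_iff.2 (by exact_mod_cast this)
  · have card_box : ((Fintype.piFinset fun _ : ι => Finset.range (B * m + 1)).card : ℝ) =
        ((B : ℝ) * m + 1) ^ Fintype.card ι := by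
      simp
    have one_le_m : (1 : ℝ) ≤ m := by exact_mod_cast hm
    rw [Finset.sum_const, nsmul_eq_mul, card_box]
    calc ((B : ℝ) * m + 1) ^ Fintype.card ι * (C * (m : ℝ) ^ (-s)) ^ d
        ≤ (((B : ℝ) + 1) * m) ^ Fintype.card ι * (C * (m : ℝ) ^ (-s)) ^ d := by
          gcongr
          linarith
      _ = C ^ d * ((B : ℝ) + 1) ^ Fintype.card ι *
          ((m : ℝ) ^ (Fintype.card ι : ℝ) * (m : ℝ) ^ (-s * d)) := by
          rw [mul_pow, Real.mul_rpow hC (by positivity), ← Real.rpow_mul hm₀.le, Real.rpow_natCast]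
          ring
      _ = C ^ d * ((B : ℝ) + 1) ^ Fintype.card ι * (m : ℝ) ^ (Fintype.card ι - s * d) := by
          rw [← Real.rpow_add hm₀, neg_mul, ← sub_eq_add_neg]

theorem exists_tsum_ediam_rpow_solutionExponents_le (ha : ∀ i, 0 < a i)
    (hcond : (∀ i, 1 ≤ a i) ∨ ∑ i, a i < 1) (hs : 1 ≤ s) (ht : 0 ≤ t) {d : ℝ} (hd₀ : 0 < d)
    (hd₁ : d < 1) :
    ∃ C : ℝ, ∀ m : ℕ, 0 < m → ∑' k, Metric.ediam (solutionExponents a s t m k) ^ d ≤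
      ENNReal.ofReal (C * (m : ℝ) ^ (Fintype.card ι - s * d)) := by
  by_cases hsum : ∑ i, a i < 1
  · obtain ⟨B, hB⟩ := Finite.exists_le fun i => ⌈(2 + ∑ j, a j) / a i⌉₊
    exact ⟨_, fun m hm => tsum_ediam_rpow_solutionExponents_le_of_sum_lt_one ha hsum hs ht hd₀
      (Nat.le_add_left 1 B)
      (fun i => (Nat.le_ceil _).trans (by exact_mod_cast (hB i).trans B.le_succ)) hm⟩
  · have : Nonempty ι := by
      by_contra hempty
      rw [not_nonempty_iff] at hempty
      simp at hsum
    exact ⟨_, fun m hm => tsum_ediam_rpow_solutionExponents_le_of_one_le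
      (hcond.resolve_right hsum) (by linarith) ht hd₀ hd₁ hm⟩

theorem dimH_limsup_solutionExponents_le (ha : ∀ i, 0 < a i)
    (hcond : (∀ i, 1 ≤ a i) ∨ ∑ i, a i < 1) (hs : (Fintype.card ι : ℝ) + 1 < s) (ht : 0 ≤ t) :
    dimH (limsup (fun i : ℕ × (ι → ℕ) => solutionExponents a s t i.1 i.2) cofinite) ≤
      ENNReal.ofReal ((Fintype.card ι + 1) / s) := by
  have hs₁ : 1 < s := (le_add_of_nonneg_left (Nat.cast_nonneg _)).trans_lt hs
  have hs₀ : 0 < s := zero_lt_one.trans hs₁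
  have dim_lt_one : (Fintype.card ι + 1) / s < 1 := (div_lt_one hs₀).2 hs
  refine ge_of_tendsto
    (ENNReal.continuous_ofReal.continuousWithinAt (s := Set.Ioi ((Fintype.card ι + 1) / s))) ?_
  filter_upwards [Ioo_mem_nhdsGT dim_lt_one] with d ⟨hd, hd₁⟩
  have hd₀ : 0 < d := (by positivity : 0 < (Fintype.card ι + 1) / s).trans hd
  have exponent_lt : Fintype.card ι - s * d < -1 := by
    rw [div_lt_iff₀ hs₀] at hd
    linarith
  obtain ⟨C, hC⟩ := exists_tsum_ediam_rpow_solutionExponents_le ha hcond hs₁.le ht hd₀ hd₁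
  exact dimH_limsup_cofinite_le hd₀ <| tsum_prod_ne_top_of_le_mul_rpow exponent_lt
    (fun k => by simp [solutionExponents, hd₀]) hC

end Solutions

theorem statement2_general {ι : Type*} [Fintype ι] (a : ι → ℝ) (ha : ∀ i, 0 < a i)
    (hcond : (∀ i, 1 ≤ a i) ∨ ∑ i, a i < 1) (s : ℝ) (hs : 0 < s) :
    dimH {α ∈ Set.Ici s | {sol : ℤ × (ι → ℤ) | sol.1 ∈ PS α ∧ (∀ i, sol.2 i ∈ PS α) ∧
        IsNontrivialSolution a sol.1 sol.2}.Infinite} ≤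
      ENNReal.ofReal ((Fintype.card ι + 1) / s) := by
  rcases le_or_gt s (Fintype.card ι + 1) with hs_le | hs_gt
  · calc dimH _ ≤ dimH (Set.univ : Set ℝ) := dimH_mono (Set.subset_univ _)
      _ = 1 := Real.dimH_univ
      _ ≤ ENNReal.ofReal ((Fintype.card ι + 1) / s) :=
          ENNReal.one_le_ofReal.2 ((one_le_div hs).2 hs_le)
  · calc dimH _ ≤ dimH (⋃ t : ℕ, limsup (fun i : ℕ × (ι → ℕ) =>
              solutionExponents a s t i.1 i.2) cofinite) := by
          refine dimH_mono fun α ⟨hα, hinf⟩ => ?_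
          obtain ⟨t, ht⟩ := exists_nat_ge α
          exact Set.mem_iUnion.2
            ⟨t, setOf_infinite_solutions_subset_limsup a s t ⟨⟨hα, ht⟩, hinf⟩⟩
      _ ≤ ENNReal.ofReal ((Fintype.card ι + 1) / s) := by
          rw [dimH_iUnion]
          exact iSup_le fun t => dimH_limsup_solutionExponents_le ha hcond hs_gt t.cast_nonneg

/-- A solution `(y, x₁, …, xₙ) ∈ PS(α)^{n+1}` of `y = a₁x₁ + ⋯ + aₙxₙ` is non-trivial
unless `a₁ + ⋯ + aₙ = 1` and `y = x₁ = ⋯ = xₙ`. If all `aᵢ ≥ 1`, or `a₁ + ⋯ + aₙ < 1`,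
then for `n + 1 < s < t` the set of `α ∈ [s, t]` for which there are infinitely many
non-trivial solutions has Hausdorff dimension at most `(n + 1)/s`. -/
theorem statement2 (n : ℕ) (hn : 1 ≤ n) (a : Fin n → ℝ) (ha : ∀ i, 0 < a i)
    (hcond : (∀ i, 1 ≤ a i) ∨ ∑ i, a i < 1)
    (s t : ℝ) (hs : (n : ℝ) + 1 < s) (hst : s < t) :
    dimH {α ∈ Set.Icc s t |
      {sol : ℤ × (Fin n → ℤ) |
        sol.1 ∈ PS α ∧ (∀ i, sol.2 i ∈ PS α) ∧
        (sol.1 : ℝ) = ∑ i, a i * (sol.2 i : ℝ) ∧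
        ¬(∑ i, a i = 1 ∧ ∀ i, sol.2 i = sol.1)}.Infinite} ≤
      ENNReal.ofReal (((n : ℝ) + 1) / s) := by
  have general := statement2_general a ha hcond s (by linarith [n.cast_nonneg (α := ℝ)])
  rw [Fintype.card_fin] at general
  refine (dimH_mono ?_).trans general
  exact fun _ hα => ⟨hα.1.1, hα.2⟩
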